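/- Let Γ be a finite abelian group, S the set of pairs (I,D) with I ⊆ D ⊆ Γ, I nontrivial elementary, D/I cyclic, and T as above. Let S″ = {(I,D) ∈ S : #I is a prime power}. Then #S″ = #T, where T is the set of tuples (p, H, I*, D*) with p prime, H ⊆ Γ with Γ/H cyclic of order prime to p, and I* ⊆ D* ⊆ Γ_p with I* nontrivial, D*/I* cyclic. -/

import Mathlib

/-- The subgroup of elements of order coprime to `p`; the quotient by it is the
maximal p-quotient Γ_p of the finite abelian group Γ. -/
def primeToPart (Γ : Type) [CommGroup Γ] [Fintype Γ] (p : ℕ) : Subgroup Γ where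
  carrier := {g | Nat.Coprime (orderOf g) p}
  one_mem' := by simp [Nat.Coprime]
  mul_mem' := by
    intro a b ha hb
    exact Nat.Coprime.coprime_dvd_left
      (((Commute.all a b).orderOf_mul_dvd_lcm).trans
        (Nat.lcm_dvd (dvd_mul_right _ _) (dvd_mul_left _ _)))
      (Nat.Coprime.mul ha hb)
  inv_mem' := by
    intro a ha
    simpa [orderOf_inv] using ha

/-- The maximal p-quotient of a finite abelian group. -/
abbrev maxPQuotient (Γ : Type) [CommGroup Γ] [Fintype Γ] (p : ℕ) :=
  Γ ⧸ primeToPart Γ p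

/-- A group is p-elementary if it is the (internal) product of a p-group and a cyclic
group; elementary if p-elementary for some prime p. -/
def IsElementary (G : Type) [Group G] : Prop :=
  ∃ p : ℕ, p.Prime ∧ ∃ A B : Subgroup G, IsPGroup p A ∧ IsCyclic B ∧
    A ⊓ B = ⊥ ∧ A ⊔ B = ⊤

/-- The set S of pairs (I, D) with I ⊆ D ⊆ Γ, I nontrivial elementary, D/I cyclic. -/
def SPairs (Γ : Type) [CommGroup Γ] [Fintype Γ] : Set (Subgroup Γ × Subgroup Γ) :=
  {x | x.1 ≠ ⊥ ∧ x.1 ≤ x.2 ∧ IsElementary ↥x.1 ∧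
    IsCyclic (↥x.2 ⧸ Subgroup.subgroupOf x.1 x.2)}

/-- The set T of tuples (p, H, I*, D*) with p prime, H ⊆ Γ with Γ/H cyclic of order prime
to p, I* ⊆ D* ⊆ Γ_p with I* nontrivial and D*/I* cyclic. -/
def TSet (Γ : Type) [CommGroup Γ] [Fintype Γ] :
    Set (Σ q : ℕ, Subgroup Γ × Subgroup (maxPQuotient Γ q) × Subgroup (maxPQuotient Γ q)) :=
  {x | x.1.Prime ∧ IsCyclic (Γ ⧸ x.2.1) ∧ Nat.Coprime (Nat.card (Γ ⧸ x.2.1)) x.1 ∧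
    x.2.2.1 ≠ ⊥ ∧ x.2.2.1 ≤ x.2.2.2 ∧
    IsCyclic (↥x.2.2.2 ⧸ Subgroup.subgroupOf x.2.2.1 x.2.2.2)}

/-!
Fix a prime `p` and let `K` be the prime-to-`p` part of `Γ`, so that `|K|` and `[Γ : K]` are
coprime. A subgroup `D` is then determined by `D ∩ K` and its image in `Γ_p = Γ / K`, and both can
be prescribed freely. If `I ≤ D` is a `p`-group, then `I ∩ K = 1` and `D / I` is an extension of
the image of `D` modulo the image of `I` by `D ∩ K`; as these have coprime orders, `D / I` is
cyclic if and only if both are. The prime-to-`p` datum of `(I, D)` is thus a cyclic subgroup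
`D ∩ K` of order prime to `p`, whereas `T` asks for a cyclic quotient `Γ / H` of order prime to `p`:
Pontryagin duality exchanges the two.
-/

theorem mem_of_pow_mem_of_coprime {G : Type*} [Group G] {H : Subgroup G} {x : G} {m n : ℕ}
    (hmn : m.Coprime n) (hm : x ^ m ∈ H) (hn : x ^ n ∈ H) : x ∈ H := by
  have hx : (x ^ m) ^ m.gcdA n * (x ^ n) ^ m.gcdB n = x := by
    rw [← zpow_natCast, ← zpow_natCast, ← zpow_mul, ← zpow_mul, ← zpow_add, ← Nat.gcd_eq_gcd_ab,
      hmn.gcd_eq_one, Nat.cast_one, zpow_one]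
  exact hx ▸ H.mul_mem (H.zpow_mem hm _) (H.zpow_mem hn _)

theorem pow_natCard_eq_one_of_mem {G : Type*} [Group G] {H : Subgroup G} {x : G} (hx : x ∈ H) :
    x ^ Nat.card H = 1 :=
  orderOf_dvd_iff_pow_eq_one.1 (H.orderOf_dvd_natCard hx)

theorem exists_equiv_forall_quotient_mulEquiv (G : Type*) [CommGroup G] [Finite G] :
    ∃ Φ : Subgroup G ≃ Subgroup G, ∀ H, Nonempty (G ⧸ H ≃* Φ H) := by
  obtain ⟨e⟩ := CommGroup.monoidHom_mulEquiv_of_hasEnoughRootsOfUnity G ℂ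
  -- `Φ H` is the annihilator of `H`, that is, the dual of `G ⧸ H`, carried into `G` along `e`.
  refine ⟨((CommGroup.subgroupOrderIsoSubgroupMonoidHom G ℂ).toEquiv.trans
    OrderDual.ofDual).trans e.mapSubgroup.toEquiv, fun H => ?_⟩
  obtain ⟨eH⟩ := CommGroup.monoidHom_mulEquiv_of_hasEnoughRootsOfUnity (G ⧸ H) ℂ
  exact ⟨eH.symm.trans ((MonoidHom.domRestrictHomKerEquiv ℂˣ H).symm.trans
    (e.subgroupMap (MonoidHom.domRestrictHom H ℂˣ).ker))⟩

section Subquotient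

variable {G G' : Type*} [CommGroup G] [CommGroup G']

theorem comap_subgroupMap_subgroupOf_map (f : G →* G') (I D : Subgroup G) :
    ((I.map f).subgroupOf (D.map f)).comap (f.subgroupMap D) = (I ⊔ f.ker).subgroupOf D := by
  rw [← Subgroup.comap_map_eq]
  rfl

/-- The homomorphism `D / I → f(D) / f(I)` of subquotients induced by `f`. As in the statement,
the quotient of `D` by `I` is encoded as `D ⧸ I.subgroupOf D`. -/
def subquotientMap (f : G →* G') (I D : Subgroup G) :
    D ⧸ I.subgroupOf D →* D.map f ⧸ (I.map f).subgroupOf (D.map f) :=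
  QuotientGroup.map _ _ (f.subgroupMap D) <| by
    rw [comap_subgroupMap_subgroupOf_map]
    exact Subgroup.comap_mono le_sup_left

theorem subquotientMap_surjective (f : G →* G') (I D : Subgroup G) :
    Function.Surjective (subquotientMap f I D) :=
  QuotientGroup.map_surjective_of_surjective _ _ (f.subgroupMap D)
    (QuotientGroup.mk_surjective.comp (f.subgroupMap_surjective D)) _

theorem mk_mem_ker_subquotientMap_iff {f : G →* G'} {I D : Subgroup G} (x : D) :
    QuotientGroup.mk x ∈ (subquotientMap f I D).ker ↔ (x : G) ∈ I ⊔ f.ker := by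
  rw [← Subgroup.mem_subgroupOf, ← comap_subgroupMap_subgroupOf_map]
  exact QuotientGroup.eq_one_iff (f.subgroupMap D x)

theorem nonempty_inf_ker_mulEquiv_ker_subquotientMap {f : G →* G'} {I D : Subgroup G}
    (hID : I ≤ D) (hI : Disjoint I f.ker) :
    Nonempty ((D ⊓ f.ker : Subgroup G) ≃* (subquotientMap f I D).ker) := by
  let ι : (D ⊓ f.ker : Subgroup G) →* D ⧸ I.subgroupOf D :=
    (QuotientGroup.mk' _).comp (Subgroup.inclusion inf_le_left)
  have hι : Function.Injective ι := by
    refine (injective_iff_map_eq_one ι).2 fun x hx => Subtype.ext ?_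
    exact Subgroup.disjoint_def.1 hI
      ((QuotientGroup.eq_one_iff (Subgroup.inclusion inf_le_left x)).1 hx) x.2.2
  have hrange : ι.range = (subquotientMap f I D).ker := by
    ext y
    obtain ⟨⟨x, hxD⟩, rfl⟩ := QuotientGroup.mk_surjective y
    rw [mk_mem_ker_subquotientMap_iff]
    constructor
    · rintro ⟨⟨k, hkD, hk⟩, hkx⟩
      have hkxI : k⁻¹ * x ∈ I :=
        (QuotientGroup.eq (a := (⟨k, hkD⟩ : D)) (b := ⟨x, hxD⟩)).1 hkx
      simpa using mul_mem (Subgroup.mem_sup_left hkxI) (Subgroup.mem_sup_right hk : k ∈ I ⊔ f.ker)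
    · intro hx
      obtain ⟨i, hi, k, hk, rfl⟩ := Subgroup.mem_sup.1 hx
      have hkD : k ∈ D := (D.mul_mem_cancel_left (hID hi)).1 hxD
      refine ⟨⟨k, hkD, hk⟩, QuotientGroup.eq.2 ?_⟩
      simpa [Subgroup.mem_subgroupOf, mul_comm i k] using hi
  exact ⟨(MonoidHom.ofInjective hι).trans (MulEquiv.subgroupCongr hrange)⟩

end Subquotient

section Hall

open QuotientGroup (mk')

variable {G : Type*} [CommGroup G] {K : Subgroup G}

theorem le_of_inf_le_of_map_mk'_le (hK : (Nat.card K).Coprime K.index) {D E : Subgroup G}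
    (hinf : D ⊓ K ≤ E) (hmap : D.map (mk' K) ≤ E.map (mk' K)) : D ≤ E := by
  intro x hx
  rw [Subgroup.map_le_map_iff, QuotientGroup.ker_mk'] at hmap
  obtain ⟨y, hy, k, hk, rfl⟩ := Subgroup.mem_sup.1 (hmap hx)
  refine mem_of_pow_mem_of_coprime hK ?_ (hinf ⟨D.pow_mem hx _, K.pow_index_mem _⟩)
  rw [mul_pow, pow_natCard_eq_one_of_mem hk, mul_one]
  exact E.pow_mem hy _

theorem eq_of_inf_eq_of_map_mk'_eq (hK : (Nat.card K).Coprime K.index) {D E : Subgroup G}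
    (hinf : D ⊓ K = E ⊓ K) (hmap : D.map (mk' K) = E.map (mk' K)) : D = E :=
  le_antisymm (le_of_inf_le_of_map_mk'_le hK (hinf.trans_le inf_le_left) hmap.le)
    (le_of_inf_le_of_map_mk'_le hK (hinf.symm.trans_le inf_le_left) hmap.ge)

theorem exists_inf_eq_and_map_mk'_eq (hK : (Nat.card K).Coprime K.index) {C : Subgroup G}
    (hC : C ≤ K) (J : Subgroup (G ⧸ K)) : ∃ D : Subgroup G, D ⊓ K = C ∧ D.map (mk' K) = J := by
  -- Raising to the power `K.index` maps `G` into `K` and is an automorphism of `K` preserving `C`.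
  refine ⟨J.comap (mk' K) ⊓ C.comap (powMonoidHom K.index), ?_, ?_⟩
  · ext x
    constructor
    · rintro ⟨⟨-, hxC⟩, hxK⟩
      refine mem_of_pow_mem_of_coprime hK ?_ hxC
      rw [pow_natCard_eq_one_of_mem hxK]
      exact C.one_mem
    · intro hx
      have hxJ : mk' K x ∈ J := by
        rw [QuotientGroup.mk'_apply, (QuotientGroup.eq_one_iff x).2 (hC hx)]
        exact J.one_mem
      exact ⟨⟨hxJ, C.pow_mem hx _⟩, hC hx⟩
  · refine le_antisymm ((Subgroup.map_mono inf_le_left).trans (Subgroup.map_comap_le _ J)) ?_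
    intro y hy
    obtain ⟨x, rfl⟩ := QuotientGroup.mk'_surjective K y
    refine mem_of_pow_mem_of_coprime hK ?_ ?_
    · have hxJ : x ^ Nat.card K ∈ J.comap (mk' K) := (J.comap (mk' K)).pow_mem hy _
      have hxC : (x ^ Nat.card K) ^ K.index ∈ C := by
        rw [pow_right_comm, pow_natCard_eq_one_of_mem (K.pow_index_mem x)]
        exact C.one_mem
      rw [← map_pow]
      exact Subgroup.mem_map_of_mem _ ⟨hxJ, hxC⟩
    · rw [Subgroup.index, pow_card_eq_one']
      exact one_mem _

theorem isCyclic_subquotient_iff (hK : (Nat.card K).Coprime K.index) {I D : Subgroup G}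
    (hID : I ≤ D) (hI : Disjoint I K) :
    IsCyclic (D ⧸ I.subgroupOf D) ↔ IsCyclic (D ⊓ K : Subgroup G) ∧
      IsCyclic (D.map (mk' K) ⧸ (I.map (mk' K)).subgroupOf (D.map (mk' K))) := by
  let φ := subquotientMap (mk' K) I D
  have hφ : Function.Surjective φ := subquotientMap_surjective (mk' K) I D
  obtain ⟨e⟩ := nonempty_inf_ker_mulEquiv_ker_subquotientMap (f := mk' K) hID
    (by rwa [QuotientGroup.ker_mk'])
  rw [QuotientGroup.ker_mk'] at e
  have hcop : (Nat.card φ.ker).Coprime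
      (Nat.card (D.map (mk' K) ⧸ (I.map (mk' K)).subgroupOf (D.map (mk' K)))) := by
    rw [← Nat.card_congr e.toEquiv]
    exact hK.of_dvd (Subgroup.card_dvd_of_le inf_le_right)
      ((Subgroup.card_quotient_dvd_card _).trans (Subgroup.card_subgroup_dvd_card _))
  rw [e.isCyclic]
  constructor
  · intro h
    exact ⟨inferInstance, isCyclic_of_surjective φ hφ⟩
  · rintro ⟨hker, hquot⟩
    exact Group.isCyclic_of_coprime_card_ker φ hcop hφ

end Hall

section PrimeToPart

variable {Γ : Type} [CommGroup Γ] [Fintype Γ] {p : ℕ}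

theorem le_primeToPart_iff (hp : p.Prime) {C : Subgroup Γ} :
    C ≤ primeToPart Γ p ↔ (Nat.card C).Coprime p := by
  constructor
  · intro hC
    refine ((hp.coprime_iff_not_dvd).2 fun hdvd => ?_).symm
    have := Fact.mk hp
    obtain ⟨x, hx⟩ := exists_prime_orderOf_dvd_card' p hdvd
    have hcop : (orderOf (x : Γ)).Coprime p := hC x.2
    rw [Subgroup.orderOf_coe, hx, Nat.coprime_self] at hcop
    exact hp.ne_one hcop
  · exact fun hC x hx => Nat.Coprime.coprime_dvd_left (Subgroup.orderOf_dvd_natCard C hx) hC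

theorem isPGroup_maxPQuotient (hp : p.Prime) : IsPGroup p (maxPQuotient Γ p) := by
  intro y
  obtain ⟨x, rfl⟩ := QuotientGroup.mk_surjective y
  refine ⟨(orderOf x).factorization p, (QuotientGroup.eq_one_iff _).2 ?_⟩
  change (orderOf (x ^ ordProj[p] (orderOf x))).Coprime p
  rw [orderOf_pow_of_dvd (Nat.ordProj_pos _ _).ne' (Nat.ordProj_dvd _ _)]
  exact (Nat.coprime_ordCompl hp (orderOf_pos x).ne').symm

theorem coprime_card_index_primeToPart (hp : p.Prime) :
    (Nat.card (primeToPart Γ p)).Coprime (primeToPart Γ p).index := by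
  have := Fact.mk hp
  obtain ⟨n, hn⟩ := IsPGroup.iff_card.1 (isPGroup_maxPQuotient (Γ := Γ) hp)
  rw [Subgroup.index, hn]
  exact ((le_primeToPart_iff hp).1 le_rfl).pow_right n

theorem isPGroup_iff_disjoint_primeToPart (hp : p.Prime) {I : Subgroup Γ} :
    IsPGroup p I ↔ Disjoint I (primeToPart Γ p) := by
  have := Fact.mk hp
  constructor
  · intro hI
    obtain ⟨n, hn⟩ := IsPGroup.iff_card.1 hI
    refine Subgroup.disjoint_of_coprime_natCard ?_
    rw [hn]
    exact ((le_primeToPart_iff hp).1 le_rfl).symm.pow_left n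
  · intro hI
    refine (isPGroup_maxPQuotient hp).of_injective
      ((QuotientGroup.mk' (primeToPart Γ p)).comp I.subtype) ?_
    refine (injective_iff_map_eq_one _).2 fun x hx => Subtype.ext ?_
    exact Subgroup.disjoint_def.1 hI x.2 ((QuotientGroup.eq_one_iff _).1 hx)

theorem isElementary_of_isPGroup {G : Type} [Group G] (hp : p.Prime) (hG : IsPGroup p G) :
    IsElementary G :=
  ⟨p, hp, ⊤, ⊥, hG.to_subgroup _, inferInstance, inf_bot_eq _, sup_bot_eq _⟩

theorem isPrimePow_card_iff_exists_isPGroup {G : Type*} [Group G] [Finite G] [Nontrivial G] :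
    IsPrimePow (Nat.card G) ↔ ∃ p : ℕ, p.Prime ∧ IsPGroup p G := by
  rw [isPrimePow_nat_iff]
  constructor
  · rintro ⟨p, n, hp, -, hn⟩
    exact ⟨p, hp, .of_card hn.symm⟩
  · rintro ⟨p, hp, hG⟩
    have := Fact.mk hp
    obtain ⟨n, hn, hcard⟩ := hG.nontrivial_iff_card.1 inferInstance
    exact ⟨p, n, hp, hn, hcard.symm⟩

end PrimeToPart

section Fibers

variable (Γ : Type) [CommGroup Γ]

/-- The part of `S″` at `p`: the pairs `I ≤ D` with `I` a nontrivial `p`-group and `D / I`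
cyclic. -/
def pPairs (p : ℕ) : Set (Subgroup Γ × Subgroup Γ) :=
  {x | x.1 ≠ ⊥ ∧ IsPGroup p x.1 ∧ x.1 ≤ x.2 ∧ IsCyclic (x.2 ⧸ x.1.subgroupOf x.2)}

theorem pairwise_disjoint_pPairs :
    Pairwise (Function.onFun Disjoint fun p : Nat.Primes => pPairs Γ p) := by
  intro p q hpq
  refine Set.disjoint_left.2 ?_
  rintro ⟨I, D⟩ ⟨hI, hIp, -⟩ ⟨-, hIq, -⟩
  have hcop : (p : ℕ).Coprime q := (Nat.coprime_primes p.2 q.2).2 (Subtype.coe_ne_coe.2 hpq)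
  exact hI (disjoint_self.1 (hIp.disjoint_of_coprime hIq hcop))

variable [Fintype Γ]

theorem setOf_mem_sPairs_and_isPrimePow_eq_iUnion_pPairs :
    {x | x ∈ SPairs Γ ∧ IsPrimePow (Nat.card x.1)} = ⋃ p : Nat.Primes, pPairs Γ p := by
  ext ⟨I, D⟩
  simp only [Set.mem_iUnion]
  constructor
  · rintro ⟨⟨hI, hID, -, hcyc⟩, hpow⟩
    have := (Subgroup.nontrivial_iff_ne_bot I).2 hI
    obtain ⟨p, hp, hIp⟩ := isPrimePow_card_iff_exists_isPGroup.1 hpow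
    exact ⟨⟨p, hp⟩, hI, hIp, hID, hcyc⟩
  · rintro ⟨⟨p, hp⟩, hI, hIp, hID, hcyc⟩
    have := (Subgroup.nontrivial_iff_ne_bot I).2 hI
    exact ⟨⟨hI, hID, isElementary_of_isPGroup hp hIp, hcyc⟩,
      isPrimePow_card_iff_exists_isPGroup.2 ⟨p, hp, hIp⟩⟩

/-- The decomposition of `S″` as the disjoint union over the primes `p` of its parts at `p`. -/
noncomputable def primePowPairsEquivSigma :
    {x // x ∈ SPairs Γ ∧ IsPrimePow (Nat.card x.1)} ≃ Σ p : Nat.Primes, pPairs Γ p :=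
  (Equiv.setCongr (setOf_mem_sPairs_and_isPrimePow_eq_iUnion_pPairs Γ)).trans
    (Set.unionEqSigmaOfDisjoint (pairwise_disjoint_pPairs Γ))

/-- The part of `T` at `p`, as triples `(H, I*, D*)`. -/
def pTriples (p : ℕ) :
    Set (Subgroup Γ × Subgroup (maxPQuotient Γ p) × Subgroup (maxPQuotient Γ p)) :=
  {x | IsCyclic (Γ ⧸ x.1) ∧ (Nat.card (Γ ⧸ x.1)).Coprime p ∧ x.2.1 ≠ ⊥ ∧ x.2.1 ≤ x.2.2 ∧
    IsCyclic (x.2.2 ⧸ x.2.1.subgroupOf x.2.2)}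

/-- The decomposition of `T` as the disjoint union over the primes `p` of its parts at `p`. -/
def tSetEquivSigma : {x // x ∈ TSet Γ} ≃ Σ p : Nat.Primes, pTriples Γ p where
  toFun x := ⟨⟨x.1.1, x.2.1⟩, ⟨x.1.2, x.2.2⟩⟩
  invFun x := ⟨⟨x.1, x.2.1⟩, x.1.2, x.2.2⟩
  left_inv _ := rfl
  right_inv _ := rfl

end Fibers

section Bijection

open QuotientGroup (mk')

variable {Γ : Type} [CommGroup Γ] [Fintype Γ] {p : ℕ}

theorem mem_pPairs_iff (hp : p.Prime) {I D : Subgroup Γ} :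
    (I, D) ∈ pPairs Γ p ↔ Disjoint I (primeToPart Γ p) ∧
      IsCyclic (D ⊓ primeToPart Γ p : Subgroup Γ) ∧ I.map (mk' (primeToPart Γ p)) ≠ ⊥ ∧
      I.map (mk' (primeToPart Γ p)) ≤ D.map (mk' (primeToPart Γ p)) ∧
      IsCyclic (D.map (mk' (primeToPart Γ p)) ⧸
        (I.map (mk' (primeToPart Γ p))).subgroupOf (D.map (mk' (primeToPart Γ p)))) := by
  have hK := coprime_card_index_primeToPart (Γ := Γ) hp
  have hbot (hI : Disjoint I (primeToPart Γ p)) :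
      I.map (mk' (primeToPart Γ p)) = ⊥ ↔ I = ⊥ := by
    rw [Subgroup.map_eq_bot_iff, QuotientGroup.ker_mk']
    exact ⟨hI.eq_bot_of_le, fun h => h ▸ bot_le⟩
  constructor
  · rintro ⟨hne, hIp, hID, hcyc⟩
    have hI := (isPGroup_iff_disjoint_primeToPart hp).1 hIp
    obtain ⟨hinf, hmap⟩ := (isCyclic_subquotient_iff hK hID hI).1 hcyc
    exact ⟨hI, hinf, (hbot hI).not.2 hne, Subgroup.map_mono hID, hmap⟩
  · rintro ⟨hI, hinf, hne, hle, hmap⟩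
    have hID : I ≤ D := le_of_inf_le_of_map_mk'_le hK (hI.eq_bot.trans_le bot_le) hle
    exact ⟨(hbot hI).not.1 hne, (isPGroup_iff_disjoint_primeToPart hp).2 hI, hID,
      (isCyclic_subquotient_iff hK hID hI).2 ⟨hinf, hmap⟩⟩

theorem mem_pTriples_iff (hp : p.Prime) {Φ : Subgroup Γ ≃ Subgroup Γ}
    (hΦ : ∀ H, Nonempty (Γ ⧸ H ≃* Φ H)) {H : Subgroup Γ} {I D : Subgroup (maxPQuotient Γ p)} :
    (H, I, D) ∈ pTriples Γ p ↔ IsCyclic (Φ H) ∧ Φ H ≤ primeToPart Γ p ∧ I ≠ ⊥ ∧ I ≤ D ∧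
      IsCyclic (D ⧸ I.subgroupOf D) := by
  obtain ⟨e⟩ := hΦ H
  rw [← e.isCyclic, le_primeToPart_iff hp, ← Nat.card_congr e.toEquiv]
  rfl

/-- The bijection from the part of `S″` at `p` to the part of `T` at `p`, as a map on all pairs. It
depends on a duality `Φ` of subgroups of `Γ`, which trades the subgroup `D ∩ K` of the prime-to-`p`
part `K` for the subgroup `H` with `Γ / H ≃ D ∩ K`. -/
def toTriple (Φ : Subgroup Γ ≃ Subgroup Γ) (p : ℕ) (x : Subgroup Γ × Subgroup Γ) :
    Subgroup Γ × Subgroup (maxPQuotient Γ p) × Subgroup (maxPQuotient Γ p) :=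
  (Φ.symm (x.2 ⊓ primeToPart Γ p), x.1.map (mk' _), x.2.map (mk' _))

theorem bijOn_toTriple (hp : p.Prime) {Φ : Subgroup Γ ≃ Subgroup Γ}
    (hΦ : ∀ H, Nonempty (Γ ⧸ H ≃* Φ H)) :
    Set.BijOn (toTriple Φ p) (pPairs Γ p) (pTriples Γ p) := by
  have hK := coprime_card_index_primeToPart (Γ := Γ) hp
  refine ⟨?mapsTo, ?injOn, ?surjOn⟩
  case mapsTo =>
    rintro ⟨I, D⟩ hx
    obtain ⟨-, hinf, hmap⟩ := (mem_pPairs_iff hp).1 hx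
    refine (mem_pTriples_iff hp hΦ).2 ?_
    rw [Equiv.apply_symm_apply]
    exact ⟨hinf, inf_le_right, hmap⟩
  case injOn =>
    rintro ⟨I, D⟩ hx ⟨I', D'⟩ hx' heq
    obtain ⟨hI, -⟩ := (mem_pPairs_iff hp).1 hx
    obtain ⟨hI', -⟩ := (mem_pPairs_iff hp).1 hx'
    obtain ⟨hD, hImap, hDmap⟩ : _ ∧ _ ∧ _ := by simpa only [toTriple, Prod.mk.injEq] using heq
    exact Prod.ext (eq_of_inf_eq_of_map_mk'_eq hK (hI.eq_bot.trans hI'.eq_bot.symm) hImap)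
      (eq_of_inf_eq_of_map_mk'_eq hK (Φ.symm.injective hD) hDmap)
  case surjOn =>
    rintro ⟨H, J, E⟩ hx
    obtain ⟨hcyc, hle, hJE⟩ := (mem_pTriples_iff hp hΦ).1 hx
    obtain ⟨I, hI, rfl⟩ := exists_inf_eq_and_map_mk'_eq hK bot_le J
    obtain ⟨D, hD, rfl⟩ := exists_inf_eq_and_map_mk'_eq hK hle E
    refine ⟨(I, D), (mem_pPairs_iff hp).2 ⟨disjoint_iff.2 hI, hD ▸ hcyc, hJE⟩, ?_⟩
    rw [toTriple, hD, Equiv.symm_apply_apply]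

end Bijection

/-- For a finite abelian group Γ, with
S″ = {(I,D) ∈ S : #I is a prime power}, one has #S″ = #T. -/
theorem stmt13 (Γ : Type) [CommGroup Γ] [Fintype Γ] :
    Nat.card {x // x ∈ SPairs Γ ∧ IsPrimePow (Nat.card x.1)} =
      Nat.card {x // x ∈ TSet Γ} := by
  obtain ⟨Φ, hΦ⟩ := exists_equiv_forall_quotient_mulEquiv Γ
  have e : (Σ p : Nat.Primes, pPairs Γ p) ≃ Σ p : Nat.Primes, pTriples Γ p :=
    Equiv.sigmaCongrRight fun p => (bijOn_toTriple p.2 hΦ).equiv _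
  exact Nat.card_congr
    (((primePowPairsEquivSigma Γ).trans e).trans (tSetEquivSigma Γ).symm)
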